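/- For intuitionistic fuzzy values α and β, JS(α, β) = 0 if and only if α = β. -/

import Mathlib

/-- `L p q = p·log₂(2p/(p+q)) + q·log₂(2q/(p+q))`, with Lean's conventions
`0 * log₂ _ = 0` and `x / 0 = 0`, `log₂ 0 = 0` implementing `0·log 0 = 0`
and `0·log(0/0) = 0`. -/
noncomputable def L (p q : ℝ) : ℝ :=
  p * Real.logb 2 (2 * p / (p + q)) + q * Real.logb 2 (2 * q / (p + q))

/-- An intuitionistic fuzzy value: a pair `⟨μ, ν⟩` with `0 ≤ μ`, `0 ≤ ν`,
`μ + ν ≤ 1` (hence also `μ ≤ 1` and `ν ≤ 1`). -/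
@[ext]
structure IFV where
  mu : ℝ
  nu : ℝ
  mu_nonneg : 0 ≤ mu
  nu_nonneg : 0 ≤ nu
  sum_le : mu + nu ≤ 1

/-- `Z(α,β) = L(1−μ_α, 1−μ_β) + L(ν_α, ν_β)`. -/
noncomputable def Z (a b : IFV) : ℝ := L (1 - a.mu) (1 - b.mu) + L a.nu b.nu

/-- The normalized Jensen–Shannon IF divergence `JS(α,β) = √(Z(α,β)/2)`. -/
noncomputable def JS (a b : IFV) : ℝ := Real.sqrt (Z a b / 2)

/-- Atanassov's order: `α ⊂ β` iff `μ_α ≤ μ_β` and `ν_α ≥ ν_β`. -/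
def IFV.sub (a b : IFV) : Prop := a.mu ≤ b.mu ∧ b.nu ≤ a.nu

/-- Strict Atanassov order: `α ⊊ β` iff `α ⊂ β` and `α ≠ β`. -/
def IFV.ssub (a b : IFV) : Prop := a.sub b ∧ a ≠ b

/-- The IFV `⟨1, 0⟩`. -/
def IFV.posOne : IFV := ⟨1, 0, by norm_num, le_rfl, by norm_num⟩

/-- The IFV `⟨0, 1⟩`. -/
def IFV.negOne : IFV := ⟨0, 1, le_rfl, by norm_num, by norm_num⟩

theorem aux_lt (t m : ℝ) (ht : 0 ≤ t) (hm : 0 < m) (h : t ≠ m) :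
    t - m < t * Real.log (t / m) := by
  rcases ht.eq_or_lt with rfl | ht
  · simpa using hm
  · have h1 : Real.log (m / t) < m / t - 1 := by
      apply Real.log_lt_sub_one_of_pos (by positivity)
      intro h2
      rw [div_eq_one_iff_eq ht.ne'] at h2
      exact h h2.symm
    have h3 : Real.log (t / m) = -Real.log (m / t) := by
      rw [← Real.log_inv, inv_div]
    have h4 : t * (m / t) = m := by field_simp
    rw [h3]
    nlinarith [mul_lt_mul_of_pos_left h1 ht]

theorem L_self (p : ℝ) : L p p = 0 := by
  unfold L
  by_cases hp : p = 0
  · simp [hp]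
  · have : 2 * p / (p + p) = 1 := by
      rw [← two_mul]
      exact div_self (by simpa using hp)
    simp [this]

theorem L_pos (p q : ℝ) (hp : 0 ≤ p) (hq : 0 ≤ q) (h : p ≠ q) : 0 < L p q := by
  have hm : 0 < (p + q) / 2 := by
    rcases hp.eq_or_lt with rfl | hp
    · have := lt_of_le_of_ne hq h
      linarith
    · linarith
  have h1 := aux_lt p ((p + q) / 2) hp hm (fun e => h (by linarith))
  have h2 := aux_lt q ((p + q) / 2) hq hm (fun e => h (by linarith))
  have e1 : p / ((p + q) / 2) = 2 * p / (p + q) := by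
    rw [div_div_eq_mul_div, mul_comm]
  have e2 : q / ((p + q) / 2) = 2 * q / (p + q) := by
    rw [div_div_eq_mul_div, mul_comm]
  rw [e1] at h1
  rw [e2] at h2
  have h3 : L p q = (p * Real.log (2 * p / (p + q)) + q * Real.log (2 * q / (p + q)))
      / Real.log 2 := by
    unfold L Real.logb
    ring
  rw [h3]
  apply div_pos (by linarith) (Real.log_pos (by norm_num))

theorem L_nonneg (p q : ℝ) (hp : 0 ≤ p) (hq : 0 ≤ q) : 0 ≤ L p q := by
  by_cases h : p = q
  · rw [h, L_self]
  · exact (L_pos p q hp hq h).le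

theorem JS_eq_zero_iff (a b : IFV) : JS a b = 0 ↔ a = b := by
  have ha : 0 ≤ 1 - a.mu := by linarith [a.nu_nonneg, a.sum_le]
  have hb : 0 ≤ 1 - b.mu := by linarith [b.nu_nonneg, b.sum_le]
  have n1 := L_nonneg _ _ ha hb
  have n2 := L_nonneg _ _ a.nu_nonneg b.nu_nonneg
  constructor
  · intro h
    unfold JS Z at h
    rw [Real.sqrt_eq_zero (by positivity)] at h
    ext
    · by_contra hne
      have := L_pos _ _ ha hb (fun e => hne (by linarith))
      linarith
    · by_contra hne
      have := L_pos _ _ a.nu_nonneg b.nu_nonneg hne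
      linarith
  · rintro rfl
    simp [JS, Z, L_self]
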